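/- For every ρ ∈ (0, 4], the function f_ρ is (1+ρ)-smooth: it is differentiable on ℝ and its derivative f_ρ' is Lipschitz continuous with constant 1+ρ. -/

import Mathlib

/-- The piecewise function `f_ρ` from the paper's discussion of the logistic map
embedded in gradient descent with step-size 1. -/
noncomputable def frho (ρ : ℝ) (x : ℝ) : ℝ :=
  if |x| ≤ 1 then
    ρ / 3 * |x| ^ 3 + (1 - ρ) / 2 * x ^ 2 + (ρ - 1) ^ 3 / (6 * ρ ^ 2)
  else if |x| ≤ 3 / 2 then
    -(ρ / 3) * |x| ^ 3 + (1 + 3 * ρ) / 2 * x ^ 2 - 2 * ρ * |x| +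
      ((ρ - 1) ^ 3 + 4 * ρ ^ 3) / (6 * ρ ^ 2)
  else
    1 / 2 * x ^ 2 + ρ / 4 * |x| + (4 * (ρ - 1) ^ 3 - 11 * ρ ^ 3) / (24 * ρ ^ 2)

lemma pp_hasDeriv (n : ℕ) (t : ℝ) :
    HasDerivAt (fun s : ℝ => (max s 0) ^ (n + 2)) ((n + 2) * (max t 0) ^ (n + 1)) t := by
  rcases lt_trichotomy t 0 with h | h | h
  · have h1 : (fun s : ℝ => (max s 0) ^ (n + 2)) =ᶠ[nhds t] fun _ => 0 := by
      filter_upwards [Iio_mem_nhds h] with s hs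
      rw [max_eq_right (le_of_lt hs)]; simp
    rw [max_eq_right h.le]
    simpa using (hasDerivAt_const t (0 : ℝ)).congr_of_eventuallyEq h1
  · subst h
    rw [hasDerivAt_iff_isLittleO]
    have h2 : (fun s : ℝ => s ^ (n + 2)) =o[nhds 0] fun s : ℝ => s := by
      simpa using Asymptotics.isLittleO_pow_pow (𝕜 := ℝ) (show 1 < n + 2 by omega)
    have h3 : (fun s : ℝ => (max s 0) ^ (n + 2)) =O[nhds 0] fun s : ℝ => s ^ (n + 2) := by
      apply Asymptotics.IsBigO.of_bound 1
      filter_upwards with s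
      rw [one_mul, norm_pow, norm_pow]
      gcongr
      rcases le_total s 0 with h | h <;> simp [h]
    simpa using h3.trans_isLittleO h2
  · have h1 : (fun s : ℝ => (max s 0) ^ (n + 2)) =ᶠ[nhds t] fun s => s ^ (n + 2) := by
      filter_upwards [Ioi_mem_nhds h] with s hs
      rw [max_eq_left (le_of_lt hs)]
    rw [max_eq_left h.le]
    have := (hasDerivAt_pow (n + 2) t).congr_of_eventuallyEq h1
    simpa using this

lemma pp_sub (n : ℕ) (c x : ℝ) :
    HasDerivAt (fun s : ℝ => (max (s - c) 0) ^ (n + 2)) ((n + 2) * (max (x - c) 0) ^ (n + 1)) x := by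
  have := ((pp_hasDeriv n (x - c)).comp x ((hasDerivAt_id x).sub_const c))
  refine HasDerivAt.congr_deriv this ?_
  ring

lemma pp_neg (n : ℕ) (c x : ℝ) :
    HasDerivAt (fun s : ℝ => (max (-s - c) 0) ^ (n + 2))
      (-((n + 2) * (max (-x - c) 0) ^ (n + 1))) x := by
  have := ((pp_hasDeriv n (-x - c)).comp x ((hasDerivAt_neg x).sub_const c))
  refine HasDerivAt.congr_deriv this ?_
  ring

lemma frho_eq (ρ : ℝ) (h : 0 < ρ) (x : ℝ) : frho ρ x =
    ρ / 3 * ((max (x - 0) 0) ^ 3 + (max (-x - 0) 0) ^ 3) + (1 - ρ) / 2 * x ^ 2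
    + (ρ - 1) ^ 3 / (6 * ρ ^ 2)
    - 2 * ρ / 3 * ((max (x - 1) 0) ^ 3 + (max (-x - 1) 0) ^ 3)
    + ρ / 3 * ((max (x - 3 / 2) 0) ^ 3 + (max (-x - 3 / 2) 0) ^ 3) := by
  have h0 : ρ ≠ 0 := h.ne'
  have e1 : ((ρ - 1) ^ 3 + 4 * ρ ^ 3) / (6 * ρ ^ 2) = (ρ - 1) ^ 3 / (6 * ρ ^ 2) + 2 / 3 * ρ := by
    field_simp; ring
  have e2 : (4 * (ρ - 1) ^ 3 - 11 * ρ ^ 3) / (24 * ρ ^ 2)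
      = (ρ - 1) ^ 3 / (6 * ρ ^ 2) - 11 / 24 * ρ := by
    field_simp; ring
  unfold frho
  rw [e1, e2]
  generalize (ρ - 1) ^ 3 / (6 * ρ ^ 2) = C
  rcases le_total 0 x with hx | hx
  · rw [abs_of_nonneg hx, max_eq_left (by linarith : (0:ℝ) ≤ x - 0),
      max_eq_right (by linarith : -x - 0 ≤ 0), max_eq_right (by linarith : -x - 1 ≤ 0),
      max_eq_right (by linarith : -x - 3 / 2 ≤ 0)]
    split_ifs with h1 h2
    · rw [max_eq_right (by linarith), max_eq_right (by linarith)]; ring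
    · rw [max_eq_left (by linarith), max_eq_right (by linarith)]; ring
    · rw [max_eq_left (by linarith), max_eq_left (by linarith)]; ring
  · rw [abs_of_nonpos hx, max_eq_right (by linarith : x - 0 ≤ 0),
      max_eq_left (by linarith : 0 ≤ -x - 0), max_eq_right (by linarith : x - 1 ≤ 0),
      max_eq_right (by linarith : x - 3 / 2 ≤ 0)]
    split_ifs with h1 h2
    · rw [max_eq_right (by linarith), max_eq_right (by linarith)]; ring
    · rw [max_eq_left (by linarith), max_eq_right (by linarith)]; ring
    · rw [max_eq_left (by linarith), max_eq_left (by linarith)]; ring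

lemma frho_d1 (ρ : ℝ) (h : 0 < ρ) (x : ℝ) : HasDerivAt (frho ρ)
    (ρ * ((max (x - 0) 0) ^ 2 - (max (-x - 0) 0) ^ 2) + (1 - ρ) * x
    - 2 * ρ * ((max (x - 1) 0) ^ 2 - (max (-x - 1) 0) ^ 2)
    + ρ * ((max (x - 3 / 2) 0) ^ 2 - (max (-x - 3 / 2) 0) ^ 2)) x := by
  rw [funext (frho_eq ρ h)]
  have := ((((((pp_sub 1 0 x).add (pp_neg 1 0 x)).const_mul (ρ / 3)).add
    ((hasDerivAt_pow 2 x).const_mul ((1 - ρ) / 2))).add_const ((ρ - 1) ^ 3 / (6 * ρ ^ 2))).sub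
    (((pp_sub 1 1 x).add (pp_neg 1 1 x)).const_mul (2 * ρ / 3))).add
    (((pp_sub 1 (3 / 2) x).add (pp_neg 1 (3 / 2) x)).const_mul (ρ / 3))
  refine HasDerivAt.congr_deriv this ?_
  push_cast
  ring

lemma frho_d2 (ρ : ℝ) (x : ℝ) : HasDerivAt (fun x : ℝ =>
    (ρ * ((max (x - 0) 0) ^ 2 - (max (-x - 0) 0) ^ 2) + (1 - ρ) * x
    - 2 * ρ * ((max (x - 1) 0) ^ 2 - (max (-x - 1) 0) ^ 2)
    + ρ * ((max (x - 3 / 2) 0) ^ 2 - (max (-x - 3 / 2) 0) ^ 2)))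
    (1 - ρ + ρ * (2 * (max (x - 0) 0 + max (-x - 0) 0) - 4 * (max (x - 1) 0 + max (-x - 1) 0)
      + 2 * (max (x - 3 / 2) 0 + max (-x - 3 / 2) 0))) x := by
  have := (((((pp_sub 0 0 x).sub (pp_neg 0 0 x)).const_mul ρ).add
    ((hasDerivAt_id x).const_mul (1 - ρ))).sub
    (((pp_sub 0 1 x).sub (pp_neg 0 1 x)).const_mul (2 * ρ))).add
    (((pp_sub 0 (3 / 2) x).sub (pp_neg 0 (3 / 2) x)).const_mul ρ)
  refine HasDerivAt.congr_deriv this ?_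
  push_cast
  ring

lemma frho_bd (x : ℝ) :
    0 ≤ (2 * (max (x - 0) 0 + max (-x - 0) 0) - 4 * (max (x - 1) 0 + max (-x - 1) 0)
      + 2 * (max (x - 3 / 2) 0 + max (-x - 3 / 2) 0)) ∧
    (2 * (max (x - 0) 0 + max (-x - 0) 0) - 4 * (max (x - 1) 0 + max (-x - 1) 0)
      + 2 * (max (x - 3 / 2) 0 + max (-x - 3 / 2) 0)) ≤ 2 := by
  grind

/-- For every `ρ ∈ (0, 4]`, `f_ρ` is `(1+ρ)`-smooth:
differentiable with `(1+ρ)`-Lipschitz derivative. -/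
theorem frho_smooth (ρ : ℝ) (hρ : ρ ∈ Set.Ioc (0 : ℝ) 4) :
    Differentiable ℝ (frho ρ) ∧
      LipschitzWith (Real.toNNReal (1 + ρ)) (deriv (frho ρ)) := by
  have h := hρ.1
  refine ⟨fun x => (frho_d1 ρ h x).differentiableAt, ?_⟩
  rw [funext fun x => (frho_d1 ρ h x).deriv]
  apply lipschitzWith_of_nnnorm_deriv_le (fun x => (frho_d2 ρ x).differentiableAt)
  intro x
  rw [(frho_d2 ρ x).deriv, ← NNReal.coe_le_coe, coe_nnnorm, Real.coe_toNNReal _ (by linarith),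
    Real.norm_eq_abs, abs_le]
  obtain ⟨h1, h2⟩ := frho_bd x
  constructor <;> nlinarith
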